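/- For every deterministic distributed algorithm on a channel with collision detection and every bound T, there exists a 1-activating injection pattern admissible for the adversary of type (3/4, 2) such that in the resulting execution some injected packet spends more than T rounds in a queue before being heard. Consequently, no deterministic distributed algorithm for channels with collision detection has bounded packet latency against a 1-activating adversary of injection rate 3/4 and burstiness at least 2. -/

import Mathlib

/-- Feedback that a station receives from the channel in a round. -/
inductive Feedback where
  | silence : Feedback
  | collision : Feedback
  | heard : Bool → Feedback

/-- A deterministic distributed (full-sensing) algorithm. -/
structure Algo where
  State : Type
  init : State
  transmits : State → Bool
  step : State → Feedback → Bool → State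

/-- Admissibility of a 1-activating injection pattern for the adversary of type `(ρ, b)`. -/
def Admissible (ρ : ℝ) (b : ℕ) (a : ℕ → ℕ) : Prop :=
  ∀ s n : ℕ, ((∑ t ∈ Finset.Ico s (s + n), a t : ℕ) : ℝ) ≤ ρ * n + b

/-- The execution of a deterministic distributed (full-sensing) algorithm `A` against the
1-activating injection pattern `a`; stations are identified with their activation rounds.
`(exec A a t).1 v` is the state of station `v` at the beginning of round `t`, and
`(exec A a t).2 v` the number of its pending packets at the beginning of round `t`. -/
def exec (A : Algo) (a : ℕ → ℕ) : ℕ → (ℕ → A.State) × (ℕ → ℕ)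
  | 0 => (fun _ => A.init, fun _ => 0)
  | t + 1 =>
    let st := (exec A a t).1
    let pend := (exec A a t).2
    let tx : Finset ℕ := (Finset.range t).filter fun v => 0 < pend v ∧ A.transmits (st v)
    let fb : ℕ → Feedback := fun v =>
      if tx.card = 0 then Feedback.silence
      else if tx.card = 1 then Feedback.heard (decide (v ∈ tx))
      else Feedback.collision
    (fun v => A.step (st v) (fb v) (decide (v = t ∧ a t ≠ 0)),
     fun v => (if v ∈ tx ∧ tx.card = 1 then pend v - 1 else pend v) + (if v = t then a t else 0))

/-!
The adversary keeps a whole family of scenarios open, all of which look the same to every station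
that is activated in one of them, and discards scenarios only when the channel feedback is chosen.
The family has a value, measured in half-rounds: it drops by at most `2` per round and is at most
three times the number of pending packets, plus a credit.

If `m` packets, at most one per station, are distributed over a set of `n` stations, and `s ≤ 1` of
them may be saved for credit, the value is `min (3 * m + s - 1) (2 * n + s)`. Values of
independent families add up: if each of them can, at the price of `1`, make a polled station
transmit, then together they answer by a collision, which costs `2`. Hence injecting
three packets in every four rounds, which rate `3 / 4` permits, brings in the value `8` that these
rounds consume, while a block of four rounds with one packet possibly saved has value `9`.

With bounded latency all packets of this special block are eventually heard. Either the gain of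
`1` is kept then, or it sits in the credit, the bucket level being lower by half a packet. This
allows two packets to be injected within two rounds, even in the same one; they have value `5`
where the two rounds consume `4`. In both cases the value has increased by `1`. So it is unbounded,
and so is the number of pending packets, contradicting bounded latency.
-/

open scoped Pointwise

namespace ChannelGame

section Game

variable {ι : Type*} [DecidableEq ι]

/-- One of the continuations the adversary keeps open: the packets it injects that are not yet
heard, listed by station, together with the credit, that is the number of injections forgone so
far that can still be turned into value. -/
abbrev Scenario (ι : Type*) : Type _ := Multiset ι × ℕ

/-- The stations that transmit when the algorithm polls `Q` and the packets `r` are pending. -/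
def senders (Q : Finset ι) (r : Multiset ι) : Finset ι := {v ∈ Q | v ∈ r}

/-- The scenarios of `R` in which polling `Q` results in silence. -/
def silenced (Q : Finset ι) (R : Set (Scenario ι)) : Set (Scenario ι) :=
  {p ∈ R | senders Q p.1 = ∅}

/-- The scenarios of `R` in which polling `Q` does not result in silence. -/
def unsilenced (Q : Finset ι) (R : Set (Scenario ι)) : Set (Scenario ι) :=
  {p ∈ R | (senders Q p.1).Nonempty}

/-- The scenarios of `R` in which polling `Q` results in a collision. -/
def collided (Q : Finset ι) (R : Set (Scenario ι)) : Set (Scenario ι) :=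
  {p ∈ R | 1 < (senders Q p.1).card}

/-- What remains of the scenarios of `R` in which polling `Q` lets `v` be heard: the packet of `v`
is gone. -/
def heardFrom (Q : Finset ι) (v : ι) (R : Set (Scenario ι)) : Set (Scenario ι) :=
  {p | (v ::ₘ p.1, p.2) ∈ R ∧ senders Q (v ::ₘ p.1) = {v}}

/-- The adversary's answer to polling `Q` when the family `R` has value `k`, where `W` is the
relation the new value and family have to satisfy. The last alternative is not an answer in
itself: it promises both an answer and, at the price of `1`, some transmission, so that two
independent families with this promise can answer by a collision. -/
def Response (W : ℕ → Set (Scenario ι) → Prop) (k : ℕ) (R : Set (Scenario ι)) (Q : Finset ι) :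
    Prop :=
  W (k - 2) (collided Q R) ∨ W k (silenced Q R) ∨
    ((W (k - 2) (silenced Q R) ∨ ∃ v, W (k - 2) (heardFrom Q v R)) ∧
      W (k - 1) (unsilenced Q R))

/-- A relation between values and families that the adversary can maintain: whatever is polled,
the value drops by at most `2`, and it never exceeds three times the pending packets plus the
credit of some scenario. -/
structure Responsive (W : ℕ → Set (Scenario ι) → Prop) : Prop where
  mono : ∀ {k k' R R'}, W k R → k' ≤ k → R ⊆ R' → W k' R'
  exists_le : ∀ {k R}, W k R → ∃ p ∈ R, k ≤ 3 * p.1.card + p.2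
  response : ∀ {k R}, W k R → ∀ Q, Response W k R Q

/-- The family `R` has value at least `k` for the adversary; this is the largest responsive
relation. In units of half a round, `k` bounds from below the time the algorithm needs to settle
all packets of `R`. -/
def Forces (k : ℕ) (R : Set (Scenario ι)) : Prop :=
  ∃ W : ℕ → Set (Scenario ι) → Prop, Responsive W ∧ W k R

variable {k k' k₁ k₂ : ℕ} {R R' R₁ R₂ : Set (Scenario ι)} {Q : Finset ι} {u v : ι} {r : Multiset ι}
  {W W' W₁ W₂ : ℕ → Set (Scenario ι) → Prop}

@[simp]
theorem mem_senders : v ∈ senders Q r ↔ v ∈ Q ∧ v ∈ r :=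
  Finset.mem_filter

theorem senders_add (Q : Finset ι) (r₁ r₂ : Multiset ι) :
    senders Q (r₁ + r₂) = senders Q r₁ ∪ senders Q r₂ := by
  ext; simp [and_or_left]

theorem senders_eq_empty (h : ∀ v ∈ Q, v ∉ r) : senders Q r = ∅ := by
  ext; simpa using h _

theorem one_lt_card_senders (huv : u ≠ v) (huQ : u ∈ Q) (hvQ : v ∈ Q) (hur : u ∈ r)
    (hvr : v ∈ r) : 1 < (senders Q r).card :=
  Finset.one_lt_card.2 ⟨u, by simp [*], v, by simp [*], huv⟩

theorem Response.imp (h : Response W k R Q) (hW : ∀ k R, W k R → W' k R) :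
    Response W' k R Q :=
  Or.imp (hW _ _) (.imp (hW _ _) (.imp (.imp (hW _ _) (.imp fun _ => hW _ _)) (hW _ _))) h

theorem Response.mono (h : Response W k R Q)
    (hW : ∀ {k k' R R'}, W k R → k' ≤ k → R ⊆ R' → W k' R') (hk : k' ≤ k) (hR : R ⊆ R') :
    Response W k' R' Q :=
  have hsil : silenced Q R ⊆ silenced Q R' := fun _ hp => ⟨hR hp.1, hp.2⟩
  Or.imp (hW · (by omega) fun _ hp => ⟨hR hp.1, hp.2⟩)
    (.imp (hW · hk hsil)
      (.imp
        (.imp (hW · (by omega) hsil)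
          (.imp fun _ h => hW h (by omega) fun _ hp => ⟨hR hp.1, hp.2⟩))
        (hW · (by omega) fun _ hp => ⟨hR hp.1, hp.2⟩)))
    h

theorem responsive_forces : Responsive (Forces (ι := ι)) where
  mono := fun ⟨W, hW, h⟩ hk hR => ⟨W, hW, hW.mono h hk hR⟩
  exists_le := fun ⟨_, hW, h⟩ => hW.exists_le h
  response := fun ⟨W, hW, h⟩ Q => (hW.response h Q).imp fun _ _ h => ⟨W, hW, h⟩

theorem Forces.mono (h : Forces k R) (hk : k' ≤ k) (hR : R ⊆ R') : Forces k' R' :=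
  responsive_forces.mono h hk hR

theorem Forces.of_response (hle : ∃ p ∈ R, k ≤ 3 * p.1.card + p.2)
    (h : ∀ Q, Response (fun k' R' => Forces k' R' ∨ k' ≤ k ∧ R ⊆ R') k R Q) : Forces k R := by
  have mono : ∀ {k₁ k₂ R₁ R₂}, Forces k₁ R₁ ∨ k₁ ≤ k ∧ R ⊆ R₁ → k₂ ≤ k₁ → R₁ ⊆ R₂ →
      Forces k₂ R₂ ∨ k₂ ≤ k ∧ R ⊆ R₂ := fun h hk hR =>
    h.imp (·.mono hk hR) fun h => ⟨hk.trans h.1, h.2.trans hR⟩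
  refine ⟨_, ⟨mono, ?_, ?_⟩, .inr ⟨le_rfl, subset_rfl⟩⟩
  · rintro k' R' (h' | ⟨hk, hR⟩)
    · exact responsive_forces.exists_le h'
    · obtain ⟨p, hp, hkp⟩ := hle
      exact ⟨p, hR hp, hk.trans hkp⟩
  · rintro k' R' (h' | ⟨hk, hR⟩) Q
    · exact (responsive_forces.response h' Q).imp fun _ _ => .inl
    · exact (h Q).mono mono hk hR

/-! ### Independent families -/

/-- The combination of a family living on the stations of `D` with an independent one without
credit living on the other stations. -/
def Join (D : Set ι) (W₁ W₂ : ℕ → Set (Scenario ι) → Prop) (k : ℕ) (R : Set (Scenario ι)) : Prop :=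
  ∃ k₁ k₂ R₁ R₂, W₁ k₁ R₁ ∧ W₂ k₂ R₂ ∧ (∀ p ∈ R₁, ∀ v ∈ p.1, v ∈ D) ∧
    (∀ p ∈ R₂, p.2 = 0 ∧ ∀ v ∈ p.1, v ∉ D) ∧ R₁ + R₂ ⊆ R ∧ k ≤ k₁ + k₂

theorem silenced_add_subset (h : R₁ + R₂ ⊆ R) : silenced Q R₁ + silenced Q R₂ ⊆ silenced Q R := by
  rintro _ ⟨p, ⟨hp, hpQ⟩, q, ⟨hq, hqQ⟩, rfl⟩
  exact ⟨h (Set.add_mem_add hp hq), by simp [senders_add, hpQ, hqQ]⟩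

theorem heardFrom_add_silenced_subset (h : R₁ + R₂ ⊆ R) :
    heardFrom Q v R₁ + silenced Q R₂ ⊆ heardFrom Q v R := by
  rintro _ ⟨p, ⟨hp, hpQ⟩, q, ⟨hq, hqQ⟩, rfl⟩
  refine ⟨by simpa [Prod.mk_add_mk, Prod.add_def] using h (Set.add_mem_add hp hq), ?_⟩
  rw [Prod.fst_add, ← Multiset.cons_add, senders_add, hpQ, hqQ, Finset.union_empty]

theorem collided_add_subset (h : R₁ + R₂ ⊆ R) : collided Q R₁ + R₂ ⊆ collided Q R := by
  rintro _ ⟨p, ⟨hp, hpQ⟩, q, hq, rfl⟩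
  refine ⟨h (Set.add_mem_add hp hq), hpQ.trans_le (Finset.card_le_card ?_)⟩
  simp [senders_add]

theorem unsilenced_add_subset (h : R₁ + R₂ ⊆ R) : unsilenced Q R₁ + R₂ ⊆ unsilenced Q R := by
  rintro _ ⟨p, ⟨hp, hpQ⟩, q, hq, rfl⟩
  exact ⟨h (Set.add_mem_add hp hq), hpQ.mono (by simp [senders_add])⟩

theorem unsilenced_add_unsilenced_subset {D : Set ι} (hD₁ : ∀ p ∈ R₁, ∀ v ∈ p.1, v ∈ D)
    (hD₂ : ∀ p ∈ R₂, ∀ v ∈ p.1, v ∉ D) (h : R₁ + R₂ ⊆ R) :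
    unsilenced Q R₁ + unsilenced Q R₂ ⊆ collided Q R := by
  rintro _ ⟨p, ⟨hp, u, hu⟩, q, ⟨hq, v, hv⟩, rfl⟩
  rw [mem_senders] at hu hv
  refine ⟨h (Set.add_mem_add hp hq), one_lt_card_senders (u := u) (v := v) ?_ hu.1 hv.1
    (by simp [hu.2]) (by simp [hv.2])⟩
  rintro rfl
  exact hD₂ q hq _ hv.2 (hD₁ p hp _ hu.2)

theorem fst_mem_of_mem_heardFrom {D : Set ι} (hD : ∀ p ∈ R, ∀ u ∈ p.1, u ∈ D) :
    ∀ p ∈ heardFrom Q v R, ∀ u ∈ p.1, u ∈ D := fun _ hp u hu =>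
  hD _ hp.1 u (Multiset.mem_cons_of_mem hu)

theorem response_join_of_silenced_left {D : Set ι} (hR₁ : W₁ k₁ R₁)
    (hsil₁ : W₁ k₁ (silenced Q R₁))
    (hans₂ : W₂ (k₂ - 2) (silenced Q R₂) ∨ ∃ v, W₂ (k₂ - 2) (heardFrom Q v R₂))
    (hun₂ : W₂ (k₂ - 1) (unsilenced Q R₂)) (hD₁ : ∀ p ∈ R₁, ∀ v ∈ p.1, v ∈ D)
    (hD₂ : ∀ p ∈ R₂, p.2 = 0 ∧ ∀ v ∈ p.1, v ∉ D) (hadd : R₁ + R₂ ⊆ R) (hle : k ≤ k₁ + k₂) :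
    Response (Join D W₁ W₂) k R Q := by
  have hadd' : R₂ + R₁ ⊆ R := by rwa [add_comm]
  refine .inr <| .inr ⟨hans₂.imp (fun h => ?_) (.imp fun v h => ?_), ?_⟩
  · exact ⟨_, _, _, _, hsil₁, h, fun p hp => hD₁ p hp.1, fun p hp => hD₂ p hp.1,
      silenced_add_subset hadd, by omega⟩
  · exact ⟨_, _, _, _, hsil₁, h, fun p hp => hD₁ p hp.1,
      fun p hp => ⟨(hD₂ _ hp.1).1,
        fst_mem_of_mem_heardFrom (D := Dᶜ) (fun p hp => (hD₂ p hp).2) p hp⟩,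
      add_comm (silenced Q R₁) _ ▸ heardFrom_add_silenced_subset hadd', by omega⟩
  · exact ⟨_, _, _, _, hR₁, hun₂, hD₁, fun p hp => hD₂ p hp.1,
      add_comm R₁ _ ▸ unsilenced_add_subset hadd', by omega⟩

theorem response_join_of_silenced_right {D : Set ι} (hR₂ : W₂ k₂ R₂)
    (hsil₂ : W₂ k₂ (silenced Q R₂))
    (hans₁ : W₁ (k₁ - 2) (silenced Q R₁) ∨ ∃ v, W₁ (k₁ - 2) (heardFrom Q v R₁))
    (hun₁ : W₁ (k₁ - 1) (unsilenced Q R₁)) (hD₁ : ∀ p ∈ R₁, ∀ v ∈ p.1, v ∈ D)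
    (hD₂ : ∀ p ∈ R₂, p.2 = 0 ∧ ∀ v ∈ p.1, v ∉ D) (hadd : R₁ + R₂ ⊆ R) (hle : k ≤ k₁ + k₂) :
    Response (Join D W₁ W₂) k R Q := by
  refine .inr <| .inr ⟨hans₁.imp (fun h => ?_) (.imp fun v h => ?_), ?_⟩
  · exact ⟨_, _, _, _, h, hsil₂, fun p hp => hD₁ p hp.1, fun p hp => hD₂ p hp.1,
      silenced_add_subset hadd, by omega⟩
  · exact ⟨_, _, _, _, h, hsil₂, fst_mem_of_mem_heardFrom hD₁, fun p hp => hD₂ p hp.1,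
      heardFrom_add_silenced_subset hadd, by omega⟩
  · exact ⟨_, _, _, _, hun₁, hR₂, fun p hp => hD₁ p hp.1, hD₂, unsilenced_add_subset hadd,
      by omega⟩

theorem Responsive.join {D : Set ι} (h₁ : Responsive W₁) (h₂ : Responsive W₂) :
    Responsive (Join D W₁ W₂) where
  mono := fun ⟨k₁, k₂, R₁, R₂, hR₁, hR₂, hD₁, hD₂, hadd, hle⟩ hk hR =>
    ⟨k₁, k₂, R₁, R₂, hR₁, hR₂, hD₁, hD₂, hadd.trans hR, hk.trans hle⟩
  exists_le := fun ⟨k₁, k₂, R₁, R₂, hR₁, hR₂, _, _, hadd, hle⟩ => by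
    obtain ⟨p, hp, hkp⟩ := h₁.exists_le hR₁
    obtain ⟨q, hq, hkq⟩ := h₂.exists_le hR₂
    refine ⟨p + q, hadd (Set.add_mem_add hp hq), ?_⟩
    simp only [Prod.fst_add, Prod.snd_add, Multiset.card_add]
    omega
  response := by
    rintro k R ⟨k₁, k₂, R₁, R₂, hR₁, hR₂, hD₁, hD₂, hadd, hle⟩ Q
    obtain hcol₁ | hans₁ := h₁.response hR₁ Q
    · exact .inl ⟨_, _, _, _, hcol₁, hR₂, fun p hp => hD₁ p hp.1, hD₂,
        collided_add_subset hadd, by omega⟩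
    obtain hcol₂ | hans₂ := h₂.response hR₂ Q
    · exact .inl ⟨_, _, _, _, hR₁, hcol₂, hD₁, fun p hp => hD₂ p hp.1,
        add_comm R₁ _ ▸ collided_add_subset (add_comm R₁ R₂ ▸ hadd), by omega⟩
    obtain hsil₁ | ⟨hans₁, hun₁⟩ := hans₁ <;> obtain hsil₂ | ⟨hans₂, hun₂⟩ := hans₂
    · exact .inr <| .inl ⟨_, _, _, _, hsil₁, hsil₂, fun p hp => hD₁ p hp.1,
        fun p hp => hD₂ p hp.1, silenced_add_subset hadd, hle⟩
    · exact response_join_of_silenced_left hR₁ hsil₁ hans₂ hun₂ hD₁ hD₂ hadd hle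
    · exact response_join_of_silenced_right hR₂ hsil₂ hans₁ hun₁ hD₁ hD₂ hadd hle
    · exact .inl ⟨_, _, _, _, hun₁, hun₂, fun p hp => hD₁ p hp.1, fun p hp => hD₂ p hp.1,
        unsilenced_add_unsilenced_subset hD₁ (fun p hp => (hD₂ p hp).2) hadd, by omega⟩

theorem Forces.add {D : Set ι} (h₁ : Forces k R₁) (h₂ : Forces k' R₂)
    (hD₁ : ∀ p ∈ R₁, ∀ v ∈ p.1, v ∈ D) (hD₂ : ∀ p ∈ R₂, p.2 = 0 ∧ ∀ v ∈ p.1, v ∉ D) :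
    Forces (k + k') (R₁ + R₂) :=
  ⟨_, responsive_forces.join responsive_forces, _, _, _, _, h₁, h₂, hD₁, hD₂, subset_rfl, le_rfl⟩

end Game

/-! ### Distributing packets over a set of stations -/

section Choice

variable {ι : Type*}

/-- The scenarios in which the packets of `F` are pending and, moreover, `m` units have been
distributed among the stations of `X`, at most one each, and the credit, at most `s`. -/
def choiceFamily (F : Multiset ι) (X : Finset ι) (m s : ℕ) : Set (Scenario ι) :=
  {p | ∃ S ⊆ X, p.1 = F + S.val ∧ S.card + p.2 = m ∧ p.2 ≤ s}

/-- The relation that `R` contains a family `choiceFamily F X m s` of value at least `k`. -/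
def ContainsChoice (k : ℕ) (R : Set (Scenario ι)) : Prop :=
  ∃ (F : Multiset ι) (X : Finset ι) (m s : ℕ), s ≤ 1 ∧ m ≤ X.card + s ∧
    k ≤ 2 * F.card + min (3 * m + s - 1) (2 * X.card + s) ∧ choiceFamily F X m s ⊆ R

variable {F : Multiset ι} {X X' T Q : Finset ι} {m m' s k : ℕ} {p : Scenario ι}
  {R : Set (Scenario ι)} {u v x y : ι}

theorem choiceFamily_add_subset (hT : T ⊆ X) (hX : X' ⊆ X) (hTX : Disjoint T X')
    (hm : m' + T.card = m) : choiceFamily (F + T.val) X' m' s ⊆ choiceFamily F X m s := by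
  classical
  rintro p ⟨S, hS, hp, hSm, hs⟩
  have hTS : Disjoint T S := hTX.mono_right hS
  refine ⟨T ∪ S, Finset.union_subset hT (hS.trans hX), ?_, ?_, hs⟩
  · rw [hp, add_assoc, ← Finset.disjUnion_eq_union T S hTS]
    rfl
  · rw [Finset.card_union_of_disjoint hTS]
    omega

theorem choiceFamily_mono (hX : X' ⊆ X) : choiceFamily F X' m s ⊆ choiceFamily F X m s :=
  fun _ ⟨S, hS, hp⟩ => ⟨S, hS.trans hX, hp⟩

theorem mem_of_mem_choiceFamily (hp : p ∈ choiceFamily F X m s) (hv : v ∈ F) : v ∈ p.1 := by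
  obtain ⟨S, -, hpS, -⟩ := hp
  simp [hpS, hv]

theorem mem_or_mem_of_mem_choiceFamily (hp : p ∈ choiceFamily F X m s) (hv : v ∈ p.1) :
    v ∈ F ∨ v ∈ X := by
  obtain ⟨S, hS, hpS, -⟩ := hp
  rw [hpS, Multiset.mem_add] at hv
  exact hv.imp_right fun h => hS h

theorem ContainsChoice.exists_le (h : ContainsChoice k R) : ∃ p ∈ R, k ≤ 3 * p.1.card + p.2 := by
  obtain ⟨F, X, m, s, hs, hm, hk, hR⟩ := h
  obtain ⟨S, hS, hSm⟩ := Finset.exists_subset_card_eq (show min m X.card ≤ X.card by omega)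
  refine ⟨(F + S.val, m - min m X.card), hR ⟨S, hS, rfl, ?_⟩, ?_⟩
  · dsimp only
    omega
  · simp only [Multiset.card_add, Finset.card_val]
    omega

/-- A single packet needs only one candidate station, and where every station of `X` is bound to
receive a packet, these packets can be moved to `F`. -/
theorem ContainsChoice.exists_reduced (h : ContainsChoice k R) :
    ∃ (F : Multiset ι) (X : Finset ι) (m s : ℕ), s ≤ 1 ∧ (X = ∅ ∨ m < X.card + s) ∧
      (m ≤ 1 → X.card ≤ m) ∧ m ≤ X.card + s ∧
      k ≤ 2 * F.card + min (3 * m + s - 1) (2 * X.card + s) ∧ choiceFamily F X m s ⊆ R := by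
  obtain ⟨F, X, m, s, hs, hm, hk, hR⟩ := h
  obtain ⟨Y, hYX, hY⟩ : ∃ Y ⊆ X, if m ≤ 1 then Y.card = min m X.card else Y.card = X.card := by
    split_ifs
    · exact Finset.exists_subset_card_eq (min_le_right _ _)
    · exact ⟨X, subset_rfl, rfl⟩
  have hYR := (choiceFamily_mono hYX).trans hR
  have hYm : m ≤ Y.card + s := by split_ifs at hY <;> omega
  have hYk : k ≤ 2 * F.card + min (3 * m + s - 1) (2 * Y.card + s) := by split_ifs at hY <;> omega
  obtain hlt | heq := hYm.lt_or_eq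
  · exact ⟨F, Y, m, s, hs, .inr hlt, fun h => by rw [if_pos h] at hY; omega, hYm, hYk, hYR⟩
  · refine ⟨F + Y.val, ∅, s, s, hs, .inl rfl, by simp, by simp, ?_, ?_⟩
    · simp only [Multiset.card_add, Finset.card_val, Finset.card_empty]
      omega
    · exact (choiceFamily_add_subset subset_rfl (by simp) (by simp) (by omega)).trans hYR

/-- The scenarios in which two packets have been distributed to `x` and `y`. -/
def twoPackets (x y : ι) : Set (Scenario ι) :=
  {p | p.1.card = 2 ∧ (∀ v ∈ p.1, v = x ∨ v = y) ∧ p.2 = 0}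

theorem twoPackets_comm (x y : ι) : twoPackets x y = twoPackets y x := by
  simp only [twoPackets, or_comm]

variable [DecidableEq ι]

theorem choiceFamily_subset_collided (huv : u ≠ v) (huQ : u ∈ Q) (hvQ : v ∈ Q) (huF : u ∈ F)
    (hvF : v ∈ F) (hR : choiceFamily F X m s ⊆ R) : choiceFamily F X m s ⊆ collided Q R :=
  fun _ hp => ⟨hR hp, one_lt_card_senders huv huQ hvQ (mem_of_mem_choiceFamily hp huF)
    (mem_of_mem_choiceFamily hp hvF)⟩

theorem choiceFamily_subset_unsilenced (hvQ : v ∈ Q) (hvF : v ∈ F)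
    (hR : choiceFamily F X m s ⊆ R) : choiceFamily F X m s ⊆ unsilenced Q R :=
  fun _ hp => ⟨hR hp, v, mem_senders.2 ⟨hvQ, mem_of_mem_choiceFamily hp hvF⟩⟩

theorem choiceFamily_subset_silenced (hF : ∀ v ∈ Q, v ∉ F) (hX : ∀ v ∈ Q, v ∉ X)
    (hR : choiceFamily F X m s ⊆ R) : choiceFamily F X m s ⊆ silenced Q R :=
  fun _ hp => ⟨hR hp, senders_eq_empty fun v hv hvp =>
    (mem_or_mem_of_mem_choiceFamily hp hvp).elim (hF v hv) (hX v hv)⟩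

theorem choiceFamily_erase_subset_heardFrom (hvQ : v ∈ Q) (hvF : v ∈ F)
    (hF : ∀ u ∈ Q, u ∈ F → u = v) (hX : ∀ u ∈ Q, u ∈ X → u = v)
    (hR : choiceFamily F X m s ⊆ R) : choiceFamily (F.erase v) X m s ⊆ heardFrom Q v R := by
  rintro p ⟨S, hS, hpS, hp⟩
  have hcons : v ::ₘ p.1 = F + S.val := by rw [hpS, ← Multiset.cons_add, Multiset.cons_erase hvF]
  have hmem : (v ::ₘ p.1, p.2) ∈ choiceFamily F X m s := ⟨S, hS, hcons, hp⟩
  refine ⟨hR hmem, Finset.eq_singleton_iff_unique_mem.2 ⟨by simp [hvQ], fun u hu => ?_⟩⟩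
  rw [mem_senders] at hu
  exact (mem_or_mem_of_mem_choiceFamily hmem hu.2).elim (hF u hu.1) (hX u hu.1)

/-- A polled station of `F` together with another polled station that holds a packet, or can be
made to hold one, collides; alone, it may be heard. -/
theorem response_of_mem (hs : s ≤ 1) (hX : m ≤ 1 → X.card ≤ m) (hm : m ≤ X.card + s)
    (hk : k ≤ 2 * F.card + min (3 * m + s - 1) (2 * X.card + s))
    (hR : choiceFamily F X m s ⊆ R) (huQ : u ∈ Q) (huF : u ∈ F) :
    Response ContainsChoice k R Q := by
  by_cases hF : ∀ v ∈ Q, v ∈ F → v = u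
  · by_cases hXu : ∀ v ∈ Q, v ∈ X → v = u
    · refine .inr <| .inr ⟨.inr ⟨u, F.erase u, X, m, s, hs, hm, ?_,
        choiceFamily_erase_subset_heardFrom huQ huF hF hXu hR⟩, F, X, m, s, hs, hm, by omega,
        choiceFamily_subset_unsilenced huQ huF hR⟩
      have := Multiset.card_erase_add_one huF
      omega
    · push Not at hXu
      obtain ⟨v, hvQ, hvX, hvu⟩ := hXu
      have hcardv := Finset.card_erase_add_one hvX
      have hsub : choiceFamily (F + Finset.val {v}) (X.erase v) (m - 1) s ⊆ R :=
        (choiceFamily_add_subset (by simpa) (Finset.erase_subset _ _) (by simp)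
          (by rw [Finset.card_singleton]; omega)).trans hR
      refine .inl ⟨_, _, _, _, hs, by omega, ?_,
        choiceFamily_subset_collided hvu hvQ huQ (by simp) (by simp [huF]) hsub⟩
      rw [Multiset.card_add, Finset.card_val, Finset.card_singleton]
      omega
  · push Not at hF
    obtain ⟨v, hvQ, hvF, hvu⟩ := hF
    exact .inl ⟨F, X, m, s, hs, hm, by omega, choiceFamily_subset_collided hvu hvQ huQ hvF huF hR⟩

theorem response_of_forall_notMem (hs : s ≤ 1) (hX₀ : X = ∅ ∨ m < X.card + s)
    (hX : m ≤ 1 → X.card ≤ m) (hm : m ≤ X.card + s)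
    (hk : k ≤ 2 * F.card + min (3 * m + s - 1) (2 * X.card + s))
    (hR : choiceFamily F X m s ⊆ R) (hF : ∀ v ∈ Q, v ∉ F) :
    Response ContainsChoice k R Q := by
  by_cases hXQ : ∀ v ∈ Q, v ∉ X
  · exact .inr <| .inl ⟨F, X, m, s, hs, hm, hk, choiceFamily_subset_silenced hF hXQ hR⟩
  push Not at hXQ
  obtain ⟨u, huQ, huX⟩ := hXQ
  have hcardu := Finset.card_erase_add_one huX
  have hlt : m < X.card + s := hX₀.resolve_left (Finset.ne_empty_of_mem huX)
  by_cases hXu : ∀ v ∈ Q, v ∈ X → v = u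
  · refine .inr <| .inr ⟨.inl ⟨F, X.erase u, m, s, hs, by omega, by omega,
        choiceFamily_subset_silenced hF (fun v hvQ hvX => ?_)
          ((choiceFamily_mono (Finset.erase_subset _ _)).trans hR)⟩,
      F + Finset.val {u}, X.erase u, m - 1, s, hs, by omega, ?_,
        choiceFamily_subset_unsilenced huQ (by simp) <|
          (choiceFamily_add_subset (by simpa) (Finset.erase_subset _ _) (by simp)
            (by rw [Finset.card_singleton]; omega)).trans hR⟩
    · exact Finset.ne_of_mem_erase hvX (hXu v hvQ (Finset.mem_of_mem_erase hvX))
    · rw [Multiset.card_add, Finset.card_val, Finset.card_singleton]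
      omega
  · push Not at hXu
    obtain ⟨v, hvQ, hvX, hvu⟩ := hXu
    have hcardv := Finset.card_erase_add_one (Finset.mem_erase.2 ⟨hvu, hvX⟩)
    refine .inl ⟨F + Finset.val {v, u}, (X.erase u).erase v, m - 2, s, hs, by omega, ?_,
      choiceFamily_subset_collided hvu hvQ huQ (by simp) (by simp) <|
        (choiceFamily_add_subset ?_ ?_ ?_ ?_).trans hR⟩
    · rw [Multiset.card_add, Finset.card_val, Finset.card_pair hvu]
      omega
    · simp [Finset.insert_subset_iff, huX, hvX]
    · exact (Finset.erase_subset _ _).trans (Finset.erase_subset _ _)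
    · simp
    · rw [Finset.card_pair hvu]
      omega

theorem responsive_containsChoice : Responsive (ContainsChoice (ι := ι)) where
  mono := fun ⟨F, X, m, s, hs, hm, hk, hR⟩ hk' hR' =>
    ⟨F, X, m, s, hs, hm, hk'.trans hk, hR.trans hR'⟩
  exists_le := ContainsChoice.exists_le
  response := fun h Q => by
    obtain ⟨F, X, m, s, hs, hX₀, hX, hm, hk, hR⟩ := h.exists_reduced
    by_cases hF : ∀ v ∈ Q, v ∉ F
    · exact response_of_forall_notMem hs hX₀ hX hm hk hR hF
    · push Not at hF
      obtain ⟨u, huQ, huF⟩ := hF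
      exact response_of_mem hs hX hm hk hR huQ huF

theorem forces_choiceFamily (hs : s ≤ 1) (hm : m ≤ X.card + s) :
    Forces (2 * F.card + min (3 * m + s - 1) (2 * X.card + s)) (choiceFamily F X m s) :=
  ⟨_, responsive_containsChoice, F, X, m, s, hs, hm, le_rfl, subset_rfl⟩

theorem Forces.of_mem {r : Multiset ι} (h : (r, 0) ∈ R) : Forces (2 * r.card) R := by
  refine (forces_choiceFamily (F := r) (X := ∅) zero_le_one (Nat.zero_le _)).mono (by omega) ?_
  rintro p ⟨S, hS, hp, hm, -⟩
  rw [Finset.subset_empty] at hS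
  obtain rfl : p = (r, 0) := Prod.ext (by simpa [hS] using hp) (by omega)
  exact h

theorem response_twoPackets_of_notMem (hxQ : x ∈ Q) (hyQ : y ∉ Q) :
    Response Forces 5 (twoPackets x y) Q := by
  have hyy : ({y, y}, 0) ∈ silenced Q (twoPackets x y) := by
    refine ⟨by simp [twoPackets], senders_eq_empty fun v hv => ?_⟩
    simpa using ne_of_mem_of_not_mem hv hyQ
  have hxy : ({x, y}, 0) ∈ unsilenced Q (twoPackets x y) :=
    ⟨by simp [twoPackets], x, by simp [hxQ]⟩
  exact .inr <| .inr ⟨.inl ((Forces.of_mem hyy).mono (by simp) subset_rfl),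
    (Forces.of_mem hxy).mono (by simp) subset_rfl⟩

theorem forces_twoPackets (hxy : x ≠ y) : Forces 5 (twoPackets x y) := by
  refine .of_response ⟨({x, x}, 0), by simp [twoPackets], by simp⟩ fun Q => ?_
  by_cases hx : x ∈ Q <;> by_cases hy : y ∈ Q
  · have hcol : ({x, y}, 0) ∈ collided Q (twoPackets x y) :=
      ⟨by simp [twoPackets], one_lt_card_senders hxy hx hy (by simp) (by simp)⟩
    exact .inl <| .inl <| (Forces.of_mem hcol).mono (by simp) subset_rfl
  · exact (response_twoPackets_of_notMem hx hy).imp fun _ _ => .inl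
  · rw [twoPackets_comm]
    exact (response_twoPackets_of_notMem hy hx).imp fun _ _ => .inl
  · refine .inr <| .inl <| .inr ⟨le_rfl, fun p hp => ⟨hp, senders_eq_empty fun v hv hvp => ?_⟩⟩
    obtain rfl | rfl := hp.2.1 v hvp
    exacts [hx hv, hy hv]

end Choice

/-! ### Executions -/

section Execution

variable {A : Algo} {a a' : ℕ → ℕ} {t t' v : ℕ}

/-- The stations that transmit in round `t`. -/
def transmitters (A : Algo) (a : ℕ → ℕ) (t : ℕ) : Finset ℕ :=
  (Finset.range t).filter fun v => 0 < (exec A a t).2 v ∧ A.transmits ((exec A a t).1 v)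

/-- The channel feedback to station `v` in a round in which the stations of `tx` transmit. -/
def feedback (tx : Finset ℕ) (v : ℕ) : Feedback :=
  if tx.card = 0 then .silence else if tx.card = 1 then .heard (decide (v ∈ tx)) else .collision

theorem exec_succ_fst (A : Algo) (a : ℕ → ℕ) (t v : ℕ) :
    (exec A a (t + 1)).1 v =
      A.step ((exec A a t).1 v) (feedback (transmitters A a t) v) (decide (v = t ∧ a t ≠ 0)) :=
  rfl

theorem exec_succ_snd (A : Algo) (a : ℕ → ℕ) (t v : ℕ) :
    (exec A a (t + 1)).2 v =
      (if v ∈ transmitters A a t ∧ (transmitters A a t).card = 1 then (exec A a t).2 v - 1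
        else (exec A a t).2 v) + if v = t then a t else 0 :=
  rfl

theorem exec_congr (h : ∀ v < t, a v = a' v) : exec A a t = exec A a' t := by
  induction t with
  | zero => rfl
  | succ t ih => rw [exec, exec, ih fun v hv => h v (by omega), h t (by omega)]

theorem pending_le_of_le (hv : v < t) (ht : t ≤ t') : (exec A a t').2 v ≤ (exec A a t).2 v := by
  induction t', ht using Nat.le_induction with
  | base => rfl
  | succ t' ht ih =>
    refine le_trans ?_ ih
    rw [exec_succ_snd, if_neg (by omega : v ≠ t')]
    split_ifs <;> omega

/-- The injection pattern that injects the packets of `M`, each listed by the round of its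
injection. -/
def injections (M : Multiset ℕ) (v : ℕ) : ℕ :=
  M.count v

/-- In the execution with injections `r + H`, at the beginning of round `t`, the packets of `H`
have been heard, those of `r` have not, and every station that is activated at some time has the
state given by `σ`. The packets of `r` may include some that are still to be injected. -/
structure Consistent (A : Algo) (t : ℕ) (σ : ℕ → A.State) (H r : Multiset ℕ) : Prop where
  heard_lt : ∀ v ∈ H, v < t
  state_eq : ∀ v, t ≤ v ∨ v ∈ r + H → (exec A (injections (r + H)) t).1 v = σ v
  pending_eq : ∀ v, (exec A (injections (r + H)) t).2 v = if v < t then r.count v else 0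

/-- The stations that transmit in round `t`, if they have a packet, when the states are given by
`σ`. -/
def polled (A : Algo) (t : ℕ) (σ : ℕ → A.State) : Finset ℕ :=
  {v ∈ Finset.range t | A.transmits (σ v)}

namespace Consistent

variable {σ : ℕ → A.State} {H r N : Multiset ℕ}

theorem zero (A : Algo) : Consistent A 0 (fun _ => A.init) 0 0 where
  heard_lt := by simp
  state_eq _ _ := rfl
  pending_eq _ := rfl

theorem transmitters_eq (h : Consistent A t σ H r) :
    transmitters A (injections (r + H)) t = senders (polled A t σ) r := by
  ext v
  simp only [transmitters, Finset.mem_filter, Finset.mem_range, h.pending_eq, mem_senders, polled]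
  refine ⟨fun ⟨hv, hpend, htr⟩ => ?_, fun ⟨⟨hv, htr⟩, hr⟩ => ?_⟩
  · rw [if_pos hv, Multiset.count_pos] at hpend
    exact ⟨⟨hv, h.state_eq v (.inr (by simp [hpend])) ▸ htr⟩, hpend⟩
  · rw [if_pos hv, Multiset.count_pos]
    exact ⟨hv, hr, (h.state_eq v (.inr (by simp [hr]))).symm ▸ htr⟩

theorem state_succ (h : Consistent A t σ H r) (hv : t + 1 ≤ v ∨ v ∈ r + H) :
    (exec A (injections (r + H)) (t + 1)).1 v =
      A.step (σ v) (feedback (senders (polled A t σ) r) v) (decide (v = t)) := by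
  rw [exec_succ_fst, h.state_eq v (hv.imp_left (by omega)), h.transmitters_eq]
  congr 2
  simp only [eq_iff_iff, and_iff_left_iff_imp]
  rintro rfl
  exact Multiset.count_ne_zero.2 (hv.resolve_left (by omega))

theorem injections_eq_count (h : Consistent A t σ H r) : injections (r + H) t = r.count t := by
  rw [injections, Multiset.count_add, Multiset.count_eq_zero.2 fun ht => (h.heard_lt t ht).false,
    add_zero]

theorem succ (h : Consistent A t σ H r) (hQ : (senders (polled A t σ) r).card ≠ 1) :
    Consistent A (t + 1)
      (fun v => A.step (σ v) (feedback (senders (polled A t σ) r) v) (decide (v = t))) H r where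
  heard_lt v hv := (h.heard_lt v hv).trans (Nat.lt_succ_self t)
  state_eq _ := h.state_succ
  pending_eq v := by
    rw [exec_succ_snd, h.transmitters_eq, if_neg (hQ ·.2), h.pending_eq, h.injections_eq_count]
    split_ifs <;> first | omega | simp_all

theorem succ_of_heard {w : ℕ} (h : Consistent A t σ H (w ::ₘ r))
    (hQ : senders (polled A t σ) (w ::ₘ r) = {w}) :
    Consistent A (t + 1) (fun v => A.step (σ v) (feedback {w} v) (decide (v = t))) (w ::ₘ H) r := by
  have hwt : w < t := by
    have hw : w ∈ senders (polled A t σ) (w ::ₘ r) := hQ ▸ Finset.mem_singleton_self w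
    exact Finset.mem_range.1 (Finset.mem_filter.1 (mem_senders.1 hw).1).1
  have hM : r + w ::ₘ H = w ::ₘ r + H := by rw [Multiset.add_cons, Multiset.cons_add]
  refine ⟨?_, fun v hv => ?_, fun v => ?_⟩
  · simp only [Multiset.mem_cons, forall_eq_or_imp]
    exact ⟨by omega, fun v hv => (h.heard_lt v hv).trans (Nat.lt_succ_self t)⟩
  · rw [hM] at hv ⊢
    rw [h.state_succ hv, hQ]
  · rw [hM, exec_succ_snd, h.transmitters_eq, hQ, h.pending_eq, h.injections_eq_count]
    simp only [Finset.mem_singleton, Multiset.count_cons]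
    split_ifs <;> first | omega | simp_all

theorem add (h : Consistent A t σ H r) (hN : ∀ v ∈ N, t ≤ v) :
    Consistent A t σ H (r + N) := by
  have hcount : ∀ v < t, N.count v = 0 := fun v hv =>
    Multiset.count_eq_zero.2 fun hvN => hv.not_ge (hN v hvN)
  have hexec : exec A (injections (r + N + H)) t = exec A (injections (r + H)) t :=
    exec_congr fun v hv => by simp [injections, hcount v hv]
  refine ⟨h.heard_lt, fun v hv => ?_, fun v => ?_⟩
  · rw [hexec]
    refine h.state_eq v ?_
    simp only [Multiset.mem_add] at hv ⊢
    have := hN v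
    tauto
  · rw [hexec, h.pending_eq]
    split_ifs with hv
    · rw [Multiset.count_add, hcount v hv, add_zero]
    · rfl

theorem silence (h : Consistent A t σ H r) (hQ : senders (polled A t σ) r = ∅) :
    Consistent A (t + 1) (fun v => A.step (σ v) .silence (decide (v = t))) H r := by
  simpa [hQ, feedback] using h.succ (by simp [hQ])

theorem collision (h : Consistent A t σ H r) (hQ : 1 < (senders (polled A t σ) r).card) :
    Consistent A (t + 1) (fun v => A.step (σ v) .collision (decide (v = t))) H r := by
  simpa [feedback, hQ.ne', (zero_lt_one.trans hQ).ne'] using h.succ hQ.ne'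

end Consistent

/-- Against the algorithm `A`, the adversary can still, at the beginning of round `t`, continue
with any scenario of `R`: no algorithm state of a relevant station depends on which one it is.
Moreover the packets injected in each scenario, the heard ones included, satisfy `P` with its
credit. -/
def Playing (A : Algo) (t : ℕ) (P : Multiset ℕ → ℕ → Prop) (R : Set (Scenario ℕ)) : Prop :=
  ∃ σ H, ∀ p ∈ R, Consistent A t σ H p.1 ∧ P (p.1 + H) p.2

namespace Playing

variable {P P' : Multiset ℕ → ℕ → Prop} {R N : Set (Scenario ℕ)}
  {W : ℕ → Set (Scenario ℕ) → Prop} {k : ℕ}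

theorem exists_succ (h : Playing A t P R) (hW : Responsive W) (hk : W k R) :
    ∃ R', W (k - 2) R' ∧ Playing A (t + 1) P R' := by
  obtain ⟨σ, H, hR⟩ := h
  have hsil : Playing A (t + 1) P (silenced (polled A t σ) R) :=
    ⟨_, H, fun p hp => ⟨(hR p hp.1).1.silence hp.2, (hR p hp.1).2⟩⟩
  obtain hcol | hsil' | ⟨hsil' | ⟨v, hv⟩, -⟩ := hW.response hk (polled A t σ)
  · exact ⟨_, hcol, _, H, fun p hp => ⟨(hR p hp.1).1.collision hp.2, (hR p hp.1).2⟩⟩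
  · exact ⟨_, hW.mono hsil' (Nat.sub_le k 2) subset_rfl, hsil⟩
  · exact ⟨_, hsil', hsil⟩
  · refine ⟨_, hv, _, v ::ₘ H, fun p hp => ⟨(hR _ hp.1).1.succ_of_heard hp.2, ?_⟩⟩
    rw [Multiset.add_cons, ← Multiset.cons_add]
    exact (hR _ hp.1).2

theorem exists_add (h : Playing A t P R) (hW : Responsive W) (hk : W k R) (n : ℕ) :
    ∃ R', W (k - 2 * n) R' ∧ Playing A (t + n) P R' := by
  induction n with
  | zero => exact ⟨R, hk, h⟩
  | succ n ih =>
    obtain ⟨R', hk', h'⟩ := ih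
    exact h'.exists_succ hW hk'

theorem add (h : Playing A t P R) (hN : ∀ q ∈ N, ∀ v ∈ q.1, t ≤ v)
    (hP : ∀ M τ, P M τ → ∀ q ∈ N, P' (M + q.1) (τ + q.2)) : Playing A t P' (R + N) := by
  obtain ⟨σ, H, hR⟩ := h
  refine ⟨σ, H, ?_⟩
  rintro _ ⟨p, hp, q, hq, rfl⟩
  refine ⟨(hR p hp).1.add (hN q hq), ?_⟩
  rw [Prod.fst_add, add_right_comm]
  exact hP _ _ (hR p hp).2 q hq

end Playing

end Execution

/-! ### Injection budgets -/

section Budget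

variable {a a' : ℕ → ℕ} {p q b t : ℕ}

/-- The content at the beginning of round `t` of a bucket that leaks `p` units per round and into
which every packet puts `q` units. The truncated subtraction keeps it nonnegative. -/
def bucket (p q : ℕ) (a : ℕ → ℕ) : ℕ → ℕ
  | 0 => 0
  | t + 1 => bucket p q a t + q * a t - p

theorem bucket_congr (h : ∀ v < t, a v = a' v) : bucket p q a t = bucket p q a' t := by
  induction t with
  | zero => rfl
  | succ t ih => rw [bucket, bucket, ih fun v hv => h v (by omega), h t (by omega)]

theorem mul_sum_le_bucket_add (p q : ℕ) (a : ℕ → ℕ) (s n : ℕ) :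
    q * ∑ t ∈ Finset.Ico s (s + n), a t ≤ bucket p q a (s + n) + p * n := by
  induction n with
  | zero => simp
  | succ n ih =>
    rw [← add_assoc, Finset.sum_Ico_succ_top (by omega), bucket, mul_add, mul_add]
    omega

theorem admissible_of_bucket_le (hq : 0 < q) (h : ∀ t, bucket p q a t ≤ q * b) :
    Admissible (p / q) b a := by
  intro s n
  have hle : q * ∑ t ∈ Finset.Ico s (s + n), a t ≤ q * b + p * n :=
    (mul_sum_le_bucket_add p q a s n).trans (Nat.add_le_add_right (h _) _)
  have hq' : (0 : ℝ) < q := by exact_mod_cast hq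
  refine le_of_mul_le_mul_left ?_ hq'
  calc (q : ℝ) * (∑ t ∈ Finset.Ico s (s + n), a t : ℕ) ≤ q * b + p * n := by exact_mod_cast hle
    _ = q * (p / q * n + b) := by field_simp; ring

/-- The packets of `M`, each listed by the round of its injection, are injected before round `t`
by the adversary of type `(3 / 4, 2)`, with a content of at most `l` left in the bucket. -/
structure Budget (t l : ℕ) (M : Multiset ℕ) : Prop where
  lt : ∀ v ∈ M, v < t
  bucket_le_eight : ∀ t' ≤ t, bucket 3 4 (injections M) t' ≤ 8
  bucket_le : bucket 3 4 (injections M) t ≤ l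

namespace Budget

variable {l l' : ℕ} {M r : Multiset ℕ} {S : Finset ℕ}

theorem admissible (h : Budget t l M) : Admissible (3 / 4) 2 (injections M) := by
  have hbucket : ∀ t', bucket 3 4 (injections M) t' ≤ 4 * 2 := fun t' => by
    obtain ht | ht := le_total t' t
    · exact h.bucket_le_eight t' ht
    · induction t', ht using Nat.le_induction with
      | base => exact h.bucket_le_eight t le_rfl
      | succ t' ht ih =>
        have h0 : injections M t' = 0 :=
          Multiset.count_eq_zero.2 fun ht' => ht.not_gt (h.lt t' ht')
        rw [bucket, h0]
        omega
  exact_mod_cast admissible_of_bucket_le (by norm_num) hbucket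

theorem bucket_add_eq (hr : ∀ v ∈ r, t ≤ v) {t' : ℕ} (ht : t' ≤ t) :
    bucket 3 4 (injections (M + r)) t' = bucket 3 4 (injections M) t' :=
  bucket_congr fun v hv => by
    have hvr : v ∉ r := fun hvr => (hv.trans_le ht).not_ge (hr v hvr)
    simp [injections, hvr]

theorem bucket_add_succ (h : Budget t l M) (r : Multiset ℕ) {v : ℕ} (hv : t ≤ v) :
    bucket 3 4 (injections (M + r)) (v + 1) =
      bucket 3 4 (injections (M + r)) v + 4 * r.count v - 3 := by
  have hvM : v ∉ M := fun hvM => hv.not_gt (h.lt v hvM)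
  have hvr : injections (M + r) v = r.count v := by simp [injections, hvM]
  rw [bucket, hvr]

theorem add {n : ℕ} (h : Budget t l M) (hr : ∀ v ∈ r, t ≤ v ∧ v < t + n)
    (hle : ∀ i < n, bucket 3 4 (injections (M + r)) (t + i + 1) ≤ 8)
    (hl : bucket 3 4 (injections (M + r)) (t + n) ≤ l') : Budget (t + n) l' (M + r) where
  lt v hv := (Multiset.mem_add.1 hv).elim (fun hvM => (h.lt v hvM).trans_le (Nat.le_add_right t n))
    fun hvr => (hr v hvr).2
  bucket_le_eight t' ht' := by
    obtain ht | ht := le_or_gt t' t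
    · exact (bucket_add_eq (fun v hv => (hr v hv).1) ht).trans_le (h.bucket_le_eight t' ht)
    · obtain ⟨i, rfl⟩ := Nat.exists_eq_add_of_lt ht
      exact hle i (by omega)
  bucket_le := hl

/-- The content of the bucket is at most `l + 4 * S.card - 12` if it never becomes empty, and at
most `S.card` otherwise, since each round adds at most `1`. -/
theorem add_four (h : Budget t l M) (hS : S ⊆ Finset.Ico t (t + 4)) (hl : l ≤ 5) (hl' : l' ≤ 8)
    (hle : l + 4 * S.card ≤ l' + 12) (hSl : S.card ≤ l') : Budget (t + 4) l' (M + S.val) := by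
  have hSt : ∀ v ∈ S.val, t ≤ v ∧ v < t + 4 := fun v hv => Finset.mem_Ico.1 (hS hv)
  have hcount : ∀ v, S.val.count v ≤ 1 := Multiset.nodup_iff_count_le_one.1 S.nodup
  have hsum : S.val.count t + S.val.count (t + 1) + S.val.count (t + 2) + S.val.count (t + 3) =
      S.card := by
    rw [← Finset.card_val,
      ← Multiset.sum_count_eq_card (s := Finset.Ico t (t + 4)) fun v hv => hS hv]
    simp [Finset.sum_Ico_succ_top, add_assoc]
  have ht := (bucket_add_eq (M := M) (fun v hv => (hSt v hv).1) le_rfl).trans_le h.bucket_le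
  have hsucc := fun i => h.bucket_add_succ S.val (Nat.le_add_right t i)
  have hsucc₀ := hsucc 0
  have hsucc₁ := hsucc 1
  have hsucc₂ := hsucc 2
  have hsucc₃ := hsucc 3
  have hcount₀ := hcount t
  have hcount₁ := hcount (t + 1)
  have hcount₂ := hcount (t + 2)
  have hcount₃ := hcount (t + 3)
  simp only [add_zero, add_assoc, Nat.reduceAdd] at hsucc₀ hsucc₁ hsucc₂ hsucc₃
  refine h.add hSt (fun i hi => ?_) (by omega)
  interval_cases i <;> simp only [add_zero, add_assoc, Nat.reduceAdd] <;> omega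

theorem add_two (h : Budget t 3 M) (hr : ∀ v ∈ r, v = t ∨ v = t + 1) (hcard : r.card = 2) :
    Budget (t + 2) 5 (M + r) := by
  have hrt : ∀ v ∈ r, t ≤ v ∧ v < t + 2 := fun v hv => by
    have := hr v hv
    omega
  have hsum : r.count t + r.count (t + 1) = 2 := by
    rw [← hcard, ← Multiset.sum_count_eq_card (s := Finset.Ico t (t + 2))
      fun v hv => Finset.mem_Ico.2 (hrt v hv)]
    simp [Finset.sum_Ico_succ_top]
  have ht := (bucket_add_eq (M := M) (fun v hv => (hrt v hv).1) le_rfl).trans_le h.bucket_le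
  have hsucc₀ := h.bucket_add_succ r le_rfl
  have hsucc₁ := h.bucket_add_succ r (Nat.le_add_right t 1)
  simp only [add_assoc, Nat.reduceAdd] at hsucc₁
  refine h.add hrt (fun i hi => ?_) (by omega)
  interval_cases i <;> simp only [add_zero, add_assoc, Nat.reduceAdd] <;> omega

end Budget

end Budget

/-! ### The adversary's strategy -/

section Strategy

variable {A : Algo} {ρ : ℝ} {b T k l t v : ℕ} {H r : Multiset ℕ} {σ : ℕ → A.State}
  {R : Set (Scenario ℕ)}

/-- Every packet is heard within `T` rounds of its injection, in every execution of `A` against the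
adversary of type `(ρ, b)`. -/
def BoundedLatency (A : Algo) (ρ : ℝ) (b T : ℕ) : Prop :=
  ∀ a, Admissible ρ b a → ∀ v, 0 < a v → (exec A a (v + T + 1)).2 v = 0

namespace BoundedLatency

theorem notMem (hT : BoundedLatency A ρ b T) (ha : Admissible ρ b (injections (r + H)))
    (h : Consistent A t σ H r) (hv : v + T + 1 ≤ t) : v ∉ r := fun hvr => by
  have hpos : 0 < injections (r + H) v := Multiset.count_pos.2 (by simp [hvr])
  have hle := (pending_le_of_le (by omega) hv).trans_eq (hT _ ha v hpos)
  rw [h.pending_eq, if_pos (by omega)] at hle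
  exact Multiset.one_le_count_iff_mem.2 hvr |>.not_gt (by omega)

theorem card_le (hT : BoundedLatency A ρ b T) (hρ : ρ ≤ 1)
    (ha : Admissible ρ b (injections (r + H))) (h : Consistent A t σ H r)
    (hr : ∀ v ∈ r, v < t) : r.card ≤ T + b := by
  have hmem : ∀ v ∈ r, v ∈ Finset.Ico (t - T) (t - T + T) := fun v hv => by
    have hvt := hr v hv
    have hvT : ¬v + T + 1 ≤ t := fun hle => hT.notMem ha h hle hv
    rw [Finset.mem_Ico]
    omega
  have hsum : r.card ≤ ∑ v ∈ Finset.Ico (t - T) (t - T + T), injections (r + H) v := by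
    rw [← Multiset.sum_count_eq_card hmem]
    exact Finset.sum_le_sum fun v _ => by simp [injections]
  have hreal : (r.card : ℝ) ≤ T + b := calc
    (r.card : ℝ) ≤ (∑ v ∈ Finset.Ico (t - T) (t - T + T), injections (r + H) v : ℕ) := by
      exact_mod_cast hsum
    _ ≤ ρ * T + b := ha _ _
    _ ≤ T + b := by gcongr; exact mul_le_of_le_one_left T.cast_nonneg hρ
  exact_mod_cast hreal

end BoundedLatency

/-- The constraint on the injections before round `t` when a unit of credit stands for a level of
the bucket lowered by `2`, that is for half a packet. -/
def CreditBudget (t : ℕ) (M : Multiset ℕ) (τ : ℕ) : Prop :=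
  τ ≤ 1 ∧ Budget t (5 - 2 * τ) M

/-- The constraint on the injections before round `t` with a level of at most `l`, and no
credit. -/
def PlainBudget (l t : ℕ) (M : Multiset ℕ) (τ : ℕ) : Prop :=
  τ = 0 ∧ Budget t l M

/-- The adversary can reach a family of value `k` without credit in which the level of the bucket
is at most `l`. -/
def Reaches (A : Algo) (l k : ℕ) : Prop :=
  ∃ t R, Forces k R ∧ Playing A t (PlainBudget l t) R

/-- The adversary can reach, at least `n` rounds after round `e + 4`, a combination of total value
`k` of a family on the stations activated in the four rounds from `e` on and of an independent
one. -/
def ReachesJoin (A : Algo) (e n k : ℕ) : Prop :=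
  ∃ t ≥ e + 4 + n, ∃ R, Join (Set.Ico e (e + 4)) Forces Forces k R ∧
    Playing A t (CreditBudget t) R

/-- The ways to distribute three packets over the next four rounds, at most one per round, where
`s` of them may be saved for credit. -/
def block (t s : ℕ) : Set (Scenario ℕ) :=
  choiceFamily 0 (Finset.Ico t (t + 4)) 3 s

variable {s τ e n : ℕ} {M : Multiset ℕ} {q : Scenario ℕ}

theorem forces_block (hs : s ≤ 1) : Forces (8 + s) (block t s) := by
  refine (forces_choiceFamily hs ?_).mono ?_ subset_rfl <;>
    simp only [Multiset.card_zero, Nat.card_Ico] <;> omega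

theorem mem_Ico_of_mem_block (hq : q ∈ block t s) : ∀ v ∈ q.1, v ∈ Set.Ico t (t + 4) :=
  fun v hv => by simpa using mem_or_mem_of_mem_choiceFamily hq hv

theorem PlainBudget.add_block (h : PlainBudget 5 t M τ) (hq : q ∈ block t 1) :
    CreditBudget (t + 4) (M + q.1) (τ + q.2) := by
  obtain ⟨S, hS, hqS, hcard, hq1⟩ := hq
  obtain ⟨rfl, hM⟩ := h
  rw [hqS, zero_add, zero_add]
  exact ⟨hq1, hM.add_four hS le_rfl (by omega) (by omega) (by omega)⟩

theorem CreditBudget.add_block (h : CreditBudget t M τ) (hq : q ∈ block t 0) :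
    CreditBudget (t + 4) (M + q.1) (τ + q.2) := by
  obtain ⟨S, hS, hqS, hcard, hq0⟩ := hq
  obtain ⟨hτ, hM⟩ := h
  obtain hq0 : q.2 = 0 := Nat.le_zero.1 hq0
  rw [hqS, zero_add, hq0, add_zero]
  exact ⟨hτ, hM.add_four hS (by omega) (by omega) (by omega) (by omega)⟩

theorem PlainBudget.add_twoPackets (h : PlainBudget 3 t M τ) (hq : q ∈ twoPackets t (t + 1)) :
    PlainBudget 5 (t + 2) (M + q.1) (τ + q.2) :=
  ⟨by rw [h.1, hq.2.2], h.2.add_two hq.2.1 hq.1⟩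

theorem reaches_zero (A : Algo) : Reaches A 5 0 := by
  refine ⟨0, {(0, 0)}, Forces.of_mem (r := 0) (Set.mem_singleton _), fun _ => A.init, 0, ?_⟩
  rintro _ rfl
  refine ⟨.zero A, rfl, by simp, fun t' ht' => ?_, Nat.zero_le _⟩
  obtain rfl := Nat.le_zero.1 ht'
  exact Nat.zero_le _

theorem Reaches.exists_reachesJoin (h : Reaches A 5 k) : ∃ e, ReachesJoin A e 0 (k + 1) := by
  obtain ⟨t, R, hk, hplay⟩ := h
  have hjoin : Join (Set.Ico t (t + 4)) Forces Forces (k + 9) (R + block t 1) := by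
    refine ⟨9, k, _, R, forces_block le_rfl, hk, fun p => mem_Ico_of_mem_block, fun p hp => ?_,
      (add_comm _ _).subset, (add_comm _ _).le⟩
    obtain ⟨σ, H, hR⟩ := hplay
    obtain ⟨-, hcredit, hbudget⟩ := hR p hp
    exact ⟨hcredit, fun v hv hvD => hvD.1.not_gt (hbudget.lt v (by simp [hv]))⟩
  have hplay' : Playing A t (CreditBudget (t + 4)) (R + block t 1) :=
    hplay.add (fun q hq v hv => (mem_Ico_of_mem_block hq v hv).1) fun M τ h q hq => h.add_block hq
  obtain ⟨R', hk', hR'⟩ := hplay'.exists_add (responsive_forces.join responsive_forces) hjoin 4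
  exact ⟨t, t + 4, le_rfl, R', hk', hR'⟩

theorem ReachesJoin.succ (h : ReachesJoin A e n k) : ReachesJoin A e (n + 1) k := by
  obtain ⟨t, ht, R, ⟨k₁, k₂, R₁, R₂, hk₁, hk₂, hD₁, hD₂, hadd, hle⟩, hplay⟩ := h
  have hlt : ∀ p ∈ R₂, ∀ v ∈ p.1, v < t := fun p hp v hv => by
    obtain ⟨q, hq, -⟩ := responsive_forces.exists_le hk₁
    obtain ⟨σ, H, hR⟩ := hplay
    exact (hR _ (hadd (Set.add_mem_add hq hp))).2.2.lt v (by simp [hv])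
  have hk₂' : Forces (8 + k₂) (block t 0 + R₂) :=
    (forces_block zero_le_one).add hk₂ (fun p => mem_Ico_of_mem_block) fun p hp =>
      ⟨(hD₂ p hp).1, fun v hv hvt => hvt.1.not_gt (hlt p hp v hv)⟩
  have hjoin : Join (Set.Ico e (e + 4)) Forces Forces (k + 8) (R + block t 0) := by
    refine ⟨k₁, _, R₁, _, hk₁, hk₂', hD₁, ?_, ?_, by omega⟩
    · rintro _ ⟨q, hq, p, hp, rfl⟩
      have hq0 : q.2 = 0 := by
        obtain ⟨S, -, -, -, hq0⟩ := hq
        exact Nat.le_zero.1 hq0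
      refine ⟨by simp [hq0, (hD₂ p hp).1], fun v hv hvD => ?_⟩
      obtain hvq | hvp := Multiset.mem_add.1 hv
      · have := (mem_Ico_of_mem_block hq v hvq).1
        have := hvD.2
        omega
      · exact (hD₂ p hp).2 v hvp hvD
    · rw [add_comm (block t 0), ← add_assoc]
      exact Set.add_subset_add_right hadd
  have hplay' : Playing A t (CreditBudget (t + 4)) (R + block t 0) :=
    hplay.add (fun q hq v hv => (mem_Ico_of_mem_block hq v hv).1) fun M τ h q hq => h.add_block hq
  obtain ⟨R', hk', hR'⟩ := hplay'.exists_add (responsive_forces.join responsive_forces) hjoin 4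
  exact ⟨t + 4, by omega, R', hk', hR'⟩

theorem ReachesJoin.reaches (hT : BoundedLatency A (3 / 4) 2 T) (h : ReachesJoin A e T (k + 1)) :
    Reaches A 5 (k + 1) ∨ Reaches A 3 k := by
  obtain ⟨t, ht, R, ⟨k₁, k₂, R₁, R₂, hk₁, hk₂, hD₁, hD₂, hadd, hle⟩, σ, H, hR⟩ := h
  obtain ⟨p, hp, hkp⟩ := responsive_forces.exists_le hk₁
  obtain ⟨q, hq, -⟩ := responsive_forces.exists_le hk₂
  have hp0 : p.1 = 0 := Multiset.eq_zero_of_forall_notMem fun v hv => by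
    obtain ⟨hcons, hbudget⟩ := hR _ (hadd (Set.add_mem_add hp hq))
    have := (hD₁ p hp v hv).2
    exact hT.notMem (v := v) hbudget.2.admissible hcons (by omega) (by simp [hv])
  have hplay : ∀ r ∈ R₂, Consistent A t σ H r.1 ∧ CreditBudget t (r.1 + H) p.2 := fun r hr => by
    simpa [hp0, (hD₂ r hr).1] using hR _ (hadd (Set.add_mem_add hp hr))
  obtain hp2 | hp2 : p.2 = 0 ∨ p.2 = 1 := by
    have := (hplay q hq).2.1
    omega
  all_goals simp only [hp0, hp2, Multiset.card_zero] at hkp hplay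
  · exact .inl ⟨t, R₂, hk₂.mono (by omega) subset_rfl, σ, H, fun r hr =>
      ⟨(hplay r hr).1, (hD₂ r hr).1, (hplay r hr).2.2⟩⟩
  · exact .inr ⟨t, R₂, hk₂.mono (by omega) subset_rfl, σ, H, fun r hr =>
      ⟨(hplay r hr).1, (hD₂ r hr).1, (hplay r hr).2.2⟩⟩

theorem Reaches.spend (h : Reaches A 3 k) : Reaches A 5 (k + 1) := by
  obtain ⟨t, R, hk, hplay⟩ := h
  have hmem : ∀ q ∈ twoPackets t (t + 1), ∀ v ∈ q.1, t ≤ v := fun q hq v hv => by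
    have := hq.2.1 v hv
    omega
  have hk' : Forces (k + 5) (R + twoPackets t (t + 1)) := by
    rw [add_comm k, add_comm R]
    refine (forces_twoPackets (by simp)).add hk (D := Set.Ici t) hmem fun p hp => ?_
    obtain ⟨σ, H, hR⟩ := hplay
    obtain ⟨-, hcredit, hbudget⟩ := hR p hp
    exact ⟨hcredit, fun v hv hvt => hvt.not_gt (hbudget.lt v (by simp [hv]))⟩
  have hplay' : Playing A t (PlainBudget 5 (t + 2)) (R + twoPackets t (t + 1)) :=
    hplay.add hmem fun M τ h q hq => h.add_twoPackets hq
  obtain ⟨R', hk'', hR'⟩ := hplay'.exists_add responsive_forces hk' 2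
  exact ⟨t + 2, R', hk'', hR'⟩

theorem Reaches.succ (hT : BoundedLatency A (3 / 4) 2 T) (h : Reaches A 5 k) :
    Reaches A 5 (k + 1) := by
  obtain ⟨e, he⟩ := h.exists_reachesJoin
  have hjoin : ∀ n, ReachesJoin A e n (k + 1) := fun n => by
    induction n with
    | zero => exact he
    | succ n ih => exact ih.succ
  exact ((hjoin T).reaches hT).elim id Reaches.spend

theorem Reaches.le (hT : BoundedLatency A (3 / 4) 2 T) (h : Reaches A l k) : k ≤ 3 * (T + 2) := by
  obtain ⟨t, R, hk, σ, H, hR⟩ := h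
  obtain ⟨p, hp, hkp⟩ := responsive_forces.exists_le hk
  obtain ⟨hcons, hcredit, hbudget⟩ := hR p hp
  have hcard := hT.card_le (by norm_num) hbudget.admissible hcons
    fun v hv => hbudget.lt v (by simp [hv])
  omega

theorem not_boundedLatency (A : Algo) (T : ℕ) : ¬BoundedLatency A (3 / 4) 2 T := fun hT => by
  have hreach : ∀ k, Reaches A 5 k := fun k => by
    induction k with
    | zero => exact reaches_zero A
    | succ k ih => exact ih.succ hT
  exact (hreach (3 * (T + 2) + 1)).le hT |>.not_gt (Nat.lt_succ_self _)

end Strategy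

end ChannelGame

/-- for every deterministic distributed algorithm on a channel with collision
detection and every bound `T`, there is a 1-activating injection pattern admissible for the
adversary of type `(3/4, 2)` such that some injected packet spends more than `T` rounds
queued before being heard (station `v` still has a pending packet at the beginning of round
`v + T + 1`); hence no such algorithm has bounded packet latency against a 1-activating
adversary of injection rate `3/4` and burstiness at least 2. -/
theorem no_bounded_latency_at_rate_three_quarters (A : Algo) (T : ℕ) :
    ∃ a : ℕ → ℕ, Admissible (3/4) 2 a ∧
      ∃ v : ℕ, 0 < a v ∧ 0 < (exec A a (v + T + 1)).2 v := by
  by_contra! hcon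
  exact ChannelGame.not_boundedLatency A T fun a ha v hv => Nat.le_zero.1 (hcon a ha v hv)
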